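/- arXiv:2006.16456 — 2 statements merged into one kernel-verified Lean document; each statement's English description precedes it below -/
import Mathlib

section
/- The long-time transition limit factors through the set A: for all x, y ∈ S, Π(x,y) = sup_{a∈A} Π(x,a) · Π(a,y); moreover Π(x,A) = sup_{a∈A} Π(x,a) = 1 for every x ∈ S. -/
open Filter Topology Metric Set MeasureTheory
open scoped NNReal

noncomputable section

/-- A deviability density on a topological space `E`. -/
def IsDeviabilityDensity {E : Type*} [TopologicalSpace E] (p : E → ℝ) : Prop :=
  (∀ x, p x ∈ Set.Icc (0:ℝ) 1) ∧ (⨆ x, p x) = 1 ∧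
    ∀ γ ∈ Set.Ioc (0:ℝ) 1, IsCompact {x | γ ≤ p x}

variable {S : Type*} [MetricSpace S]

/-- Time shift `θ_s` on continuous paths. -/
def pshift (s : ℝ≥0) (X : C(ℝ≥0, S)) : C(ℝ≥0, S) :=
  ⟨fun t => X (s + t), X.continuous.comp (continuous_const.add continuous_id)⟩

/-- `Π_{x,t}(y)`. -/
def transDen (Px : S → C(ℝ≥0, S) → ℝ) (x : S) (t : ℝ≥0) (y : S) : ℝ :=
  ⨆ X ∈ {X : C(ℝ≥0, S) | X t = y}, Px x X

/-- The standing assumptions (2.2)--(2.5) of the paper, together with the basic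
assumptions on the family of path deviability densities `Px` and the set `A`. -/
structure DevSetup (S : Type*) [MetricSpace S] (Px : S → C(ℝ≥0, S) → ℝ) (A : Set S) :
    Prop where
  dev : ∀ x, IsDeviabilityDensity (Px x)
  start : ∀ x (X : C(ℝ≥0, S)), X 0 ≠ x → Px x X = 0
  /-- (2.2) upper semicontinuity -/
  usc : UpperSemicontinuous (fun q : S × C(ℝ≥0, S) => Px q.1 q.2)
  /-- (2.2) uniform upper compactness -/
  cpt : ∀ K : Set S, IsCompact K → ∀ γ ∈ Set.Ioc (0:ℝ) 1,
    IsCompact (⋃ x ∈ K, {X : C(ℝ≥0, S) | γ ≤ Px x X})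
  /-- (2.3) the maxitive Markov property -/
  markov : ∀ x (X : C(ℝ≥0, S)) (s : ℝ≥0),
    Px x X = (⨆ X' ∈ {X' : C(ℝ≥0, S) | ∀ u ≤ s, X' u = X u}, Px x X') *
      Px (X s) (pshift s X)
  /-- (2.4) `A` is locally finite -/
  locFin : ∀ K : Set S, IsCompact K → (K ∩ A).Finite
  /-- (2.4)(i) -/
  attract : ∀ x (X : C(ℝ≥0, S)), Px x X = 1 → (⨅ t : ℝ≥0, infDist (X t) A) = 0
  /-- (2.4)(ii) -/
  equil : ∀ a ∈ A, Px a (ContinuousMap.const ℝ≥0 a) = 1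
  /-- (2.4)(iii) -/
  connect : ∀ a ∈ A, ∀ a' ∈ A, ∃ t : ℝ≥0, 0 < t ∧ 0 < transDen Px a t a'
  /-- (2.4)(iv) -/
  nearA : ∀ ε : ℝ, 0 < ε → ∃ δ : ℝ, 0 < δ ∧ ∀ x : S, infDist x A < δ →
    ∃ s₀ s₁ : ℝ≥0, 0 < s₀ ∧ 0 < s₁ ∧ ∃ a ∈ A,
      1 - ε < transDen Px x s₀ a ∧ 1 - ε < transDen Px a s₁ x
  /-- (2.4)(v) -/
  localMove : ∀ x : S, ∀ ε : ℝ, 0 < ε → ∃ δ : ℝ, 0 < δ ∧ ∃ t₀ t₁ : ℝ≥0,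
    ∀ x' : S, dist x x' < δ →
      1 - ε < transDen Px x t₀ x' ∧ 1 - ε < transDen Px x' t₁ x
  /-- (2.5) uniform tightness -/
  tight : ∀ K₁ : Set S, IsCompact K₁ → ∀ ε : ℝ, 0 < ε → ∃ K₂ : Set S, IsCompact K₂ ∧
    Filter.limsup (fun t : ℝ≥0 => ⨆ x ∈ K₁, ⨆ y ∈ K₂ᶜ, transDen Px x t y) atTop < ε

theorem bs_inner_le {ι : Type*} {f : ι → ℝ} {s : Set ι} {c : ℝ} (hc : 0 ≤ c)
    (h : ∀ a ∈ s, f a ≤ c) (a : ι) : (⨆ (_ : a ∈ s), f a) ≤ c :=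
  Real.iSup_le (fun ha => h a ha) hc

theorem bs_le {ι : Type*} {f : ι → ℝ} {s : Set ι} {c : ℝ} (hc : 0 ≤ c)
    (h : ∀ a ∈ s, f a ≤ c) : (⨆ a ∈ s, f a) ≤ c :=
  Real.iSup_le (fun a => bs_inner_le hc h a) hc

theorem le_bs {ι : Type*} {f : ι → ℝ} {s : Set ι}
    (h1 : ∀ a, f a ≤ 1) {a : ι} (ha : a ∈ s) : f a ≤ ⨆ a ∈ s, f a := by
  have hb : BddAbove (range fun a => ⨆ (_ : a ∈ s), f a) :=
    ⟨1, by rintro _ ⟨b, rfl⟩; exact bs_inner_le zero_le_one (fun b _ => h1 b) b⟩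
  refine le_trans ?_ (le_ciSup hb a)
  have : Nonempty (a ∈ s) := ⟨ha⟩
  simp [ha]

theorem bs_nonneg {ι : Type*} {f : ι → ℝ} {s : Set ι} (h0 : ∀ a, 0 ≤ f a) :
    0 ≤ ⨆ a ∈ s, f a :=
  Real.iSup_nonneg fun a => Real.iSup_nonneg fun _ => h0 a

theorem lt_bs {ι : Type*} {f : ι → ℝ} {s : Set ι} {c : ℝ} (hc : 0 ≤ c)
    (h : c < ⨆ a ∈ s, f a) : ∃ a ∈ s, c < f a := by
  by_contra hcon
  push Not at hcon
  exact absurd h (not_lt.2 (bs_le hc hcon))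

section helpers

variable {Px : S → C(ℝ≥0, S) → ℝ} {A : Set S}

theorem Px_nonneg (hyp : DevSetup S Px A) (x : S) (X) : 0 ≤ Px x X := ((hyp.dev x).1 X).1
theorem Px_le_one (hyp : DevSetup S Px A) (x : S) (X) : Px x X ≤ 1 := ((hyp.dev x).1 X).2

theorem td_nonneg (hyp : DevSetup S Px A) (x : S) (t) (y : S) : 0 ≤ transDen Px x t y :=
  bs_nonneg (Px_nonneg hyp x)

theorem td_le_one (hyp : DevSetup S Px A) (x : S) (t) (y : S) : transDen Px x t y ≤ 1 :=
  bs_le zero_le_one fun X _ => Px_le_one hyp x X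

theorem le_td (hyp : DevSetup S Px A) (x : S) (t : ℝ≥0) (X : C(ℝ≥0, S)) :
    Px x X ≤ transDen Px x t (X t) :=
  le_bs (Px_le_one hyp x) (s := {Y : C(ℝ≥0, S) | Y t = X t}) rfl

/-- Concatenation of paths. -/
def pconcat (s : ℝ≥0) (X Y : C(ℝ≥0, S)) (h : X s = Y 0) : C(ℝ≥0, S) :=
  ⟨fun t => if t ≤ s then X t else Y (t - s), by
    refine Continuous.if_le X.continuous
      (Y.continuous.comp (continuous_id.sub continuous_const)) continuous_id continuous_const ?_
    intro t ht
    subst ht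
    simpa using h⟩

/-- Chapman-Kolmogorov inequality. -/
theorem ck (hyp : DevSetup S Px A) (x y z : S) (s t : ℝ≥0) :
    transDen Px x s y * transDen Px y t z ≤ transDen Px x (s + t) z := by
  by_contra hcon
  push Not at hcon
  set R := transDen Px x (s + t) z with hR
  have hR0 : 0 ≤ R := td_nonneg hyp _ _ _
  have h2 : ∀ X : C(ℝ≥0, S), X s = y → ∀ Y : C(ℝ≥0, S), Y t = z → Px x X * Px y Y ≤ R := by
    intro X hX Y hY
    by_cases hY0 : Y 0 = y
    · have hXY : X s = Y 0 := hX.trans hY0.symm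
      set Z := pconcat s X Y hXY with hZ
      have hZu : ∀ u ≤ s, Z u = X u := by
        intro u hu
        change (if u ≤ s then X u else Y (u - s)) = X u
        simp [hu]
      have hZs : pshift s Z = Y := by
        ext u
        change (if s + u ≤ s then X (s + u) else Y (s + u - s)) = Y u
        by_cases h : s + u ≤ s
        · have : u = 0 := by simpa using h
          subst this
          simp [hXY]
        · simp [h]
      have hZt : Z (s + t) = z := by
        rw [← hY, ← hZs]; rfl
      have hm := hyp.markov x Z s
      rw [hZs, hZu s le_rfl, hX] at hm
      have h3 : Px x X ≤ ⨆ X' ∈ {X' : C(ℝ≥0, S) | ∀ u ≤ s, X' u = Z u}, Px x X' :=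
        le_bs (Px_le_one hyp x) (s := {X' : C(ℝ≥0, S) | ∀ u ≤ s, X' u = Z u})
          (fun u hu => (hZu u hu).symm)
      calc Px x X * Px y Y ≤ Px x Z := by
            rw [hm]; exact mul_le_mul_of_nonneg_right h3 (Px_nonneg hyp _ _)
        _ ≤ R := by rw [hR, ← hZt]; exact le_td hyp _ _ _
    · rw [hyp.start y Y hY0, mul_zero]; exact hR0
  have hX : ∀ X : C(ℝ≥0, S), X s = y → Px x X * transDen Px y t z ≤ R := by
    intro X hX
    rcases (Px_nonneg hyp x X).eq_or_lt with h | h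
    · rw [← h, zero_mul]; exact hR0
    · rw [mul_comm, ← le_div_iff₀ h]
      refine bs_le (by positivity) fun Y hY => ?_
      rw [le_div_iff₀ h, mul_comm]
      exact h2 X hX Y hY
  rcases (td_nonneg hyp y t z).eq_or_lt with h | h
  · rw [← h, mul_zero] at hcon; linarith
  · refine absurd hcon (not_lt.2 ?_)
    rw [← le_div_iff₀ h]
    refine bs_le (by positivity) fun X hX' => ?_
    rw [le_div_iff₀ h]
    exact hX X hX'

theorem td_self (hyp : DevSetup S Px A) {a : S} (ha : a ∈ A) (t : ℝ≥0) :
    transDen Px a t a = 1 := by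
  refine le_antisymm (td_le_one hyp _ _ _) ?_
  have := le_td hyp a t (ContinuousMap.const ℝ≥0 a)
  rw [hyp.equil a ha] at this
  simpa using this

theorem split_le (hyp : DevSetup S Px A) (x : S) (X : C(ℝ≥0, S)) (s t : ℝ≥0) :
    Px x X ≤ transDen Px x s (X s) * transDen Px (X s) t (X (s + t)) := by
  rw [hyp.markov x X s]
  refine mul_le_mul ?_ (le_td hyp (X s) t (pshift s X)) (Px_nonneg hyp _ _) (td_nonneg hyp _ _ _)
  refine bs_le (td_nonneg hyp _ _ _) fun X' hX' => ?_
  rw [← hX' s le_rfl]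
  exact le_td hyp x s X'

theorem le_shift (hyp : DevSetup S Px A) (x : S) (X : C(ℝ≥0, S)) (s : ℝ≥0) :
    Px x X ≤ Px (X s) (pshift s X) := by
  rw [hyp.markov x X s]
  exact mul_le_of_le_one_left (Px_nonneg hyp _ _)
    (bs_le zero_le_one fun X' _ => Px_le_one hyp _ _)

/-- existence of a trajectory -/
theorem exists_one (hyp : DevSetup S Px A) (x : S) : ∃ X, Px x X = 1 := by
  obtain ⟨h01, hsup, hc⟩ := hyp.dev x
  have hne : ∀ c < 1, ∃ X, c < Px x X := by
    intro c hcl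
    have : Nonempty C(ℝ≥0, S) := ⟨ContinuousMap.const _ x⟩
    exact exists_lt_of_lt_ciSup (hsup ▸ hcl)
  have hcomp := hc (1/2) (by norm_num)
  obtain ⟨X0, hX0⟩ := hne (1/2) (by norm_num)
  have husc : UpperSemicontinuous (Px x) := fun X c hX =>
    (Continuous.prodMk_right x).continuousAt.eventually (hyp.usc (x, X) c hX)
  obtain ⟨X, hX, hmax⟩ := (husc.upperSemicontinuousOn _).exists_isMaxOn ⟨X0, hX0.le⟩ hcomp
  refine ⟨X, le_antisymm (h01 X).2 ?_⟩
  by_contra hlt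
  push Not at hlt
  obtain ⟨Y, hY⟩ := hne _ hlt
  have hY' : Y ∈ {X | 1/2 ≤ Px x X} := le_trans (by exact hX) hY.le
  exact absurd (hmax hY') (not_le.2 hY)

theorem off_compact (hyp : DevSetup S Px A) {K : Set S} (hK : IsCompact K) {δ : ℝ} (hδ : 0 < δ) :
    ∃ n : ℕ, ∃ c : ℝ, 0 ≤ c ∧ c < 1 ∧ ∀ z ∈ K, ∀ X : C(ℝ≥0, S),
      (∀ s ≤ (n : ℝ≥0), δ ≤ infDist (X s) A) → Px z X ≤ c := by
  by_contra hcon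
  push Not at hcon
  let F : ℕ → Set (S × C(ℝ≥0, S)) := fun n =>
    {q | q.1 ∈ K ∧ (1 - 1 / ((n : ℝ) + 2) ≤ Px q.1 q.2) ∧
      ∀ s ≤ (n : ℝ≥0), δ ≤ infDist (q.2 s) A}
  have hFc : ∀ n, IsClosed (F n) := by
    intro n
    refine (hK.isClosed.preimage continuous_fst).inter ((?_ : IsClosed _).inter ?_)
    · exact hyp.usc.isClosed_preimage _
    · have hset : {q : S × C(ℝ≥0, S) | ∀ s ≤ (n : ℝ≥0), δ ≤ infDist (q.2 s) A} =
          ⋂ s : ℝ≥0, ⋂ (_ : s ≤ (n : ℝ≥0)), {q | δ ≤ infDist (q.2 s) A} := by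
        ext q; simp
      change IsClosed {q : S × C(ℝ≥0, S) | ∀ s ≤ (n : ℝ≥0), δ ≤ infDist (q.2 s) A}
      rw [hset]
      refine isClosed_iInter fun s => isClosed_iInter fun _ => ?_
      refine isClosed_le continuous_const ?_
      exact (continuous_infDist_pt A).comp
        ((ContinuousEvalConst.continuous_eval_const s).comp continuous_snd)
  have hpos : ∀ n : ℕ, (0:ℝ) < 1 / ((n : ℝ) + 2) := fun n => by positivity
  have hle : ∀ n : ℕ, 1 / ((n : ℝ) + 2) ≤ 1 / 2 := fun n => by
    apply one_div_le_one_div_of_le <;> norm_num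
  have hmono : ∀ n, F (n + 1) ⊆ F n := by
    rintro n ⟨z, X⟩ ⟨h1, h2, h3⟩
    refine ⟨h1, le_trans ?_ h2, fun s hs => h3 s (hs.trans (by push_cast; simp))⟩
    have : 1 / (((n + 1 : ℕ) : ℝ) + 2) ≤ 1 / ((n : ℝ) + 2) := by
      apply one_div_le_one_div_of_le
      · positivity
      · push_cast; linarith
    linarith
  have hne : ∀ n, (F n).Nonempty := by
    intro n
    obtain ⟨z, hz, X, hX, hlt⟩ := hcon n (1 - 1 / ((n : ℝ) + 2))
      (by linarith [hle n]) (by linarith [hpos n])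
    exact ⟨(z, X), hz, hlt.le, hX⟩
  have hF0 : IsCompact (F 0) := by
    refine (hK.prod (hyp.cpt K hK (1/2) (by norm_num))).of_isClosed_subset (hFc 0) ?_
    rintro ⟨z, X⟩ ⟨h1, h2, h3⟩
    refine ⟨h1, ?_⟩
    simp only [mem_iUnion]
    refine ⟨z, h1, ?_⟩
    have := hle 0
    have h2' : 1 - 1 / (((0 : ℕ) : ℝ) + 2) ≤ Px z X := h2
    change 1/2 ≤ Px z X
    linarith
  obtain ⟨⟨z, X⟩, hq⟩ :=
    IsCompact.nonempty_iInter_of_sequence_nonempty_isCompact_isClosed F hmono hne hF0 hFc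
  rw [mem_iInter] at hq
  have h1 : Px z X = 1 := by
    refine le_antisymm (Px_le_one hyp _ _) ?_
    have ht : Tendsto (fun n : ℕ => 1 - 1 / ((n : ℝ) + 2)) atTop (𝓝 (1 - 0)) := by
      refine tendsto_const_nhds.sub ?_
      refine Tendsto.div_atTop tendsto_const_nhds ?_
      exact tendsto_atTop_add_const_right _ _ tendsto_natCast_atTop_atTop
    rw [sub_zero] at ht
    exact le_of_tendsto' ht fun n => (hq n).2.1
  have h2 := hyp.attract z X h1
  have h3 : δ ≤ ⨅ t : ℝ≥0, infDist (X t) A := by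
    refine le_ciInf fun t => ?_
    obtain ⟨n, hn⟩ := exists_nat_ge t
    exact (hq n).2.2 t hn
  linarith

theorem off_iter (hyp : DevSetup S Px A) {K : Set S} {δ c : ℝ} {T : ℝ≥0}
    (hc0 : 0 ≤ c)
    (h : ∀ z ∈ K, ∀ X : C(ℝ≥0, S), (∀ s ≤ T, δ ≤ infDist (X s) A) → Px z X ≤ c) (n : ℕ) :
    ∀ (z : S) (X : C(ℝ≥0, S)), (∀ s ≤ n * T, X s ∈ K ∧ δ ≤ infDist (X s) A) → Px z X ≤ c ^ n := by
  induction n with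
  | zero => intro z X _; simpa using Px_le_one hyp z X
  | succ n ih =>
    intro z X hX
    by_cases hz : X 0 = z
    · rw [hyp.markov z X T, pow_succ']
      have hT : T ≤ ((n + 1 : ℕ) : ℝ≥0) * T := by
        push_cast; rw [add_mul, one_mul]; exact le_add_self
      refine mul_le_mul ?_ ?_ (Px_nonneg hyp _ _) hc0
      · refine bs_le hc0 fun X' hX' => h z ?_ X' ?_
        · rw [← hz]; exact (hX 0 (zero_le)).1
        · intro s hs
          rw [hX' s hs]
          exact (hX s (hs.trans hT)).2
      · refine ih _ _ fun s hs => ?_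
        refine hX (T + s) ?_
        push_cast
        rw [add_mul, one_mul, add_comm]
        gcongr
    · rw [hyp.start z X hz]; positivity

/-- a path with positive deviability comes close to `A`. -/
theorem visit (hyp : DevSetup S Px A) (x : S) {g δ : ℝ} (hg : 0 < g) (hδ : 0 < δ) :
    ∃ N : ℝ≥0, ∀ X : C(ℝ≥0, S), g ≤ Px x X → ∃ s ≤ N, infDist (X s) A < δ := by
  obtain ⟨K, hK, hlim⟩ := hyp.tight {x} isCompact_singleton g hg
  have hbd : ∀ (t : ℝ≥0) (x : S), (⨆ y ∈ Kᶜ, transDen Px x t y) ≤ 1 := fun t x =>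
    bs_le zero_le_one fun y _ => td_le_one hyp _ _ _
  have hev := eventually_lt_of_limsup_lt hlim
    (isBoundedUnder_of ⟨1, fun t => bs_le zero_le_one fun x _ => hbd t x⟩)
  obtain ⟨s0, hs0⟩ := eventually_atTop.1 hev
  obtain ⟨T, c, hc0, hc1, hc⟩ := off_compact hyp hK hδ
  obtain ⟨n, hn⟩ := exists_pow_lt_of_lt_one hg hc1
  refine ⟨s0 + n * T, fun X hX => ?_⟩
  by_contra hcon
  push Not at hcon
  have h1 : Px (X s0) (pshift s0 X) ≤ c ^ n := by
    refine off_iter hyp hc0 hc n _ _ fun s hs => ⟨?_, ?_⟩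
    · change X (s0 + s) ∈ K
      by_contra hnot
      have h2 := hs0 (s0 + s) (le_add_of_nonneg_right (zero_le))
      have h3 : (⨆ y ∈ Kᶜ, transDen Px x (s0 + s) y) ≤
          ⨆ z ∈ ({x} : Set S), ⨆ y ∈ Kᶜ, transDen Px z (s0 + s) y :=
        le_bs (f := fun x => ⨆ y ∈ Kᶜ, transDen Px x (s0 + s) y) (hbd _) (mem_singleton x)
      have h4 : transDen Px x (s0 + s) (X (s0 + s)) ≤ ⨆ y ∈ Kᶜ, transDen Px x (s0 + s) y :=
        le_bs (f := fun y => transDen Px x (s0 + s) y) (td_le_one hyp _ _) hnot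
      have h5 := le_td hyp x (s0 + s) X
      linarith
    · exact hcon (s0 + s) (by gcongr)
  have := le_shift hyp x X s0
  linarith

end helpers

theorem stmt7 (Px : S → C(ℝ≥0, S) → ℝ) (A : Set S) (hyp : DevSetup S Px A)
    (PL : S → S → ℝ)
    (hPL : ∀ x y : S, Tendsto (fun t : ℝ≥0 => transDen Px x t y) atTop (𝓝 (PL x y))) :
    (∀ x y : S, PL x y = ⨆ a ∈ A, PL x a * PL a y) ∧
    ∀ x : S, (⨆ a ∈ A, PL x a) = 1 := by
  have PL0 : ∀ x y, 0 ≤ PL x y := fun x y => ge_of_tendsto' (hPL x y) fun t => td_nonneg hyp _ _ _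
  have PL1 : ∀ x y, PL x y ≤ 1 := fun x y => le_of_tendsto' (hPL x y) fun t => td_le_one hyp _ _ _
  have toA : ∀ x, ∀ a ∈ A, ∀ t, transDen Px x t a ≤ PL x a := by
    intro x a ha t
    refine ge_of_tendsto (hPL x a) ?_
    filter_upwards [eventually_ge_atTop t] with r hr
    have := ck hyp x a a t (r - t)
    rwa [td_self hyp ha, mul_one, add_tsub_cancel_of_le hr] at this
  have fromA : ∀ y, ∀ a ∈ A, ∀ t, transDen Px a t y ≤ PL a y := by
    intro y a ha t
    refine ge_of_tendsto (hPL a y) ?_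
    filter_upwards [eventually_ge_atTop t] with r hr
    have := ck hyp a a y (r - t) t
    rwa [td_self hyp ha, one_mul, tsub_add_cancel_of_le hr] at this
  constructor
  · intro x y
    have hR0 : 0 ≤ ⨆ a ∈ A, PL x a * PL a y :=
      bs_nonneg fun a => mul_nonneg (PL0 _ _) (PL0 _ _)
    refine le_antisymm ?_ (bs_le (PL0 x y) ?_)
    · by_contra hlt
      push Not at hlt
      set R := ⨆ a ∈ A, PL x a * PL a y with hR
      obtain ⟨g, hRg, hg⟩ := exists_between hlt
      have hg0 : 0 < g := hR0.trans_lt hRg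
      have hg1 : g ≤ 1 := hg.le.trans (PL1 x y)
      obtain ⟨δ, hδ, hnear⟩ := hyp.nearA ((g - R) / 4) (by linarith)
      obtain ⟨N, hN⟩ := visit hyp x hg0 hδ
      obtain ⟨t, ht, htN⟩ := (((hPL x y).eventually (lt_mem_nhds hg)).and
        (eventually_ge_atTop N)).exists
      obtain ⟨X, hXt, hX⟩ := lt_bs hg0.le ht
      obtain ⟨s, hs, hsδ⟩ := hN X hX.le
      obtain ⟨s₀, s₁, -, -, a, ha, h0, h1⟩ := hnear _ hsδ
      have hXt : X t = y := hXt
      have hsp := split_le hyp x X s (t - s)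
      rw [add_tsub_cancel_of_le (hs.trans htN), hXt] at hsp
      have e1 := (ck hyp x (X s) a s s₀).trans (toA _ a ha _)
      have e2 := (ck hyp a (X s) y s₁ (t - s)).trans (fromA _ a ha _)
      have e3 : PL x a * PL a y ≤ R :=
        le_bs (f := fun a => PL x a * PL a y)
          (fun a => mul_le_one₀ (PL1 _ _) (PL0 _ _) (PL1 _ _)) ha
      set p := transDen Px x s (X s)
      set q := transDen Px (X s) (t - s) y
      have hp : 0 ≤ p := td_nonneg hyp _ _ _
      have hq : 0 ≤ q := td_nonneg hyp _ _ _
      set e := (g - R) / 4 with he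
      have he0 : 0 ≤ e := by linarith
      have he1 : 0 ≤ 1 - e := by linarith
      have f1 : p * (1 - e) ≤ PL x a := (mul_le_mul_of_nonneg_left h0.le hp).trans e1
      have f2 : (1 - e) * q ≤ PL a y := (mul_le_mul_of_nonneg_right h1.le hq).trans e2
      have f3 : (p * (1 - e)) * ((1 - e) * q) ≤ R :=
        (mul_le_mul f1 f2 (by positivity) (PL0 _ _)).trans e3
      have f4 : (1 - e) ^ 2 * g ≤ (1 - e) ^ 2 * (p * q) :=
        mul_le_mul_of_nonneg_left (hX.le.trans hsp) (by positivity)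
      have f5 : (1 - 2 * e) * g ≤ (1 - e) ^ 2 * g :=
        mul_le_mul_of_nonneg_right (by nlinarith) hg0.le
      have f6 : e * g ≤ e * 1 := mul_le_mul_of_nonneg_left hg1 he0
      have f7 : (p * (1 - e)) * ((1 - e) * q) = (1 - e) ^ 2 * (p * q) := by ring
      nlinarith
    · intro a ha
      refine le_of_tendsto' ((hPL x a).mul (hPL a y)) fun t => ?_
      exact (mul_le_mul_of_nonneg_right (toA x a ha t) (td_nonneg hyp _ _ _)).trans (by
        rw [mul_comm]
        refine (mul_le_mul_of_nonneg_right (fromA y a ha t) (PL0 _ _)).trans ?_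
        rw [mul_comm]
        have htt : Tendsto (fun t : ℝ≥0 => t + t) atTop atTop :=
          tendsto_atTop_mono (fun t => le_add_of_nonneg_right (zero_le)) tendsto_id
        exact le_of_tendsto_of_tendsto' ((hPL x a).mul (hPL a y)) ((hPL x y).comp htt)
          fun t => ck hyp x a y t t)
  · intro x
    refine le_antisymm (bs_le zero_le_one fun a _ => PL1 x a) ?_
    refine le_of_forall_pos_le_add fun ε hε => ?_
    obtain ⟨X, hX⟩ := exists_one hyp x
    obtain ⟨δ, hδ, hnear⟩ := hyp.nearA ε hε
    have hinf := hyp.attract x X hX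
    obtain ⟨t, ht⟩ := exists_lt_of_ciInf_lt (hinf ▸ hδ)
    obtain ⟨s₀, s₁, -, -, a, ha, h0, -⟩ := hnear _ ht
    have h1 := le_td hyp x t X
    rw [hX] at h1
    have h2 := (ck hyp x (X t) a t s₀).trans (toA x a ha _)
    have h3 : PL x a ≤ ⨆ a ∈ A, PL x a := le_bs (f := fun a => PL x a) (PL1 x) ha
    have h4 := le_mul_of_one_le_left (td_nonneg hyp (X t) s₀ a) h1
    linarith
end
end

section
/- Any LD limit point ρ of the invariant measures P^n is determined on S by its values on A: ρ(x) = sup_{a∈A} ρ(a) · Π(a,x) for every x ∈ S, and ρ(A) = sup_{a∈A} ρ(a) = 1. -/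
open Filter Topology Metric Set MeasureTheory
open scoped NNReal

noncomputable section

variable {S : Type*} [MetricSpace S]

/-- LD convergence at the given rate of a sequence of Borel probability measures to a
deviability density. -/
def LDConv {E : Type*} [TopologicalSpace E] [MeasurableSpace E]
    (Q : ℕ → Measure E) (rate : ℕ → ℕ) (p : E → ℝ) : Prop :=
  ∀ f : E → ℝ, Continuous f → (∀ x, 0 ≤ f x) → BddAbove (Set.range f) →
    Tendsto (fun n => (∫ x, (f x) ^ (rate n) ∂(Q n)) ^ ((rate n : ℝ)⁻¹)) atTop
      (𝓝 (⨆ x, f x * p x))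

variable [MeasurableSpace S] [BorelSpace S]

/-- The max flux `Φ_ρ(Γ,Γ')` relative to the limiting transition density `PL`. -/
def maxFlux (PL : S → S → ℝ) (ρ : S → ℝ) (Γ Γ' : Set S) : ℝ :=
  ⨆ x ∈ Γ, ρ x * ⨆ y ∈ Γ', PL x y

/-- `Φ_ρ(Γ, x)`, the max flux into a point. -/
def maxFluxPt (PL : S → S → ℝ) (ρ : S → ℝ) (Γ : Set S) (x : S) : ℝ :=
  ⨆ a ∈ Γ, ρ a * PL a x

section helpers

theorem biSup_ge {E : Type*} {F : E → ℝ} {s : Set E} (h1 : ∀ x, F x ≤ 1) {x : E}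
    (hx : x ∈ s) : F x ≤ ⨆ y ∈ s, F y := by
  have hb : BddAbove (range fun y => ⨆ (_ : y ∈ s), F y) := by
    refine ⟨1, ?_⟩
    rintro _ ⟨y, rfl⟩
    exact Real.iSup_le (fun _ => h1 y) zero_le_one
  refine le_trans ?_ (le_ciSup hb x)
  simp [hx]

theorem biSup_le' {E : Type*} {F : E → ℝ} {s : Set E} {c : ℝ} (hc : 0 ≤ c)
    (h : ∀ x ∈ s, F x ≤ c) : ⨆ y ∈ s, F y ≤ c :=
  Real.iSup_le (fun y => Real.iSup_le (fun hy => h y hy) hc) hc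

theorem biSup_nonneg {E : Type*} {F : E → ℝ} {s : Set E} (h : ∀ x, 0 ≤ F x) :
    0 ≤ ⨆ y ∈ s, F y :=
  Real.iSup_nonneg fun y => Real.iSup_nonneg fun _ => h y

theorem exists_of_lt_biSup {E : Type*} {F : E → ℝ} {s : Set E} {c : ℝ} (hc : 0 ≤ c)
    (h : c < ⨆ y ∈ s, F y) : ∃ x ∈ s, c < F x := by
  by_contra! hh
  exact absurd (biSup_le' hc hh) (not_le.2 h)

theorem mul_biSup_le {E : Type*} {F : E → ℝ} {s : Set E} {r c : ℝ} (hr : 0 ≤ r) (hc : 0 ≤ c)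
    (h : ∀ x ∈ s, r * F x ≤ c) : r * (⨆ y ∈ s, F y) ≤ c := by
  rcases hr.eq_or_lt with h0 | h0
  · rw [← h0]; simpa using hc
  · rw [mul_comm, ← le_div_iff₀ h0]
    refine biSup_le' (by positivity) fun x hx => ?_
    rw [le_div_iff₀ h0, mul_comm]
    exact h x hx

variable {S : Type*} [MetricSpace S]

theorem transDen_nonneg {Px : S → C(ℝ≥0, S) → ℝ} {A : Set S} (hyp : DevSetup S Px A)
    (x : S) (t : ℝ≥0) (y : S) : 0 ≤ transDen Px x t y :=
  biSup_nonneg fun X => ((hyp.dev x).1 X).1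

theorem transDen_le_one {Px : S → C(ℝ≥0, S) → ℝ} {A : Set S} (hyp : DevSetup S Px A)
    (x : S) (t : ℝ≥0) (y : S) : transDen Px x t y ≤ 1 :=
  biSup_le' zero_le_one fun X _ => ((hyp.dev x).1 X).2

theorem le_transDen {Px : S → C(ℝ≥0, S) → ℝ} {A : Set S} (hyp : DevSetup S Px A)
    (x : S) (t : ℝ≥0) (X : C(ℝ≥0, S)) : Px x X ≤ transDen Px x t (X t) :=
  biSup_ge (s := {X' : C(ℝ≥0, S) | X' t = X t}) (fun X => ((hyp.dev x).1 X).2) rfl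

/-- concatenation of paths -/
theorem exists_concat (X Y : C(ℝ≥0, S)) (s : ℝ≥0) (h : X s = Y 0) :
    ∃ Z : C(ℝ≥0, S), (∀ u ≤ s, Z u = X u) ∧ pshift s Z = Y := by
  refine ⟨⟨fun u => if u ≤ s then X u else Y (u - s), ?_⟩, ?_, ?_⟩
  · refine Continuous.if_le X.continuous ?_ continuous_id continuous_const ?_
    · exact Y.continuous.comp (continuous_id.sub continuous_const)
    · rintro u rfl
      simpa using h
  · intro u hu
    simp [hu]
  · ext t
    by_cases ht : t = 0
    · subst ht; simp [pshift, h]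
    · have : ¬ (s + t ≤ s) := by
        intro hh
        exact ht (by simpa using hh)
      simp [pshift, ht]

theorem transDen_chapman {Px : S → C(ℝ≥0, S) → ℝ} {A : Set S} (hyp : DevSetup S Px A)
    (x z y : S) (s t : ℝ≥0) :
    transDen Px x s z * transDen Px z t y ≤ transDen Px x (s + t) y := by
  have h0 := transDen_nonneg hyp x (s + t) y
  refine mul_biSup_le (transDen_nonneg hyp x s z) h0 fun Y hY => ?_
  rw [mul_comm]
  refine mul_biSup_le ((hyp.dev z).1 Y).1 h0 fun X hX => ?_
  by_cases hz : Y 0 = z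
  · obtain ⟨Z, hZ1, hZ2⟩ := exists_concat X Y s (by rw [hz]; exact hX)
    have hZs : Z s = z := by rw [hZ1 s le_rfl]; exact hX
    have hm := hyp.markov x Z s
    rw [hZ2, hZs] at hm
    have hpre : Px x X ≤ ⨆ X' ∈ {X' : C(ℝ≥0, S) | ∀ u ≤ s, X' u = Z u}, Px x X' :=
      biSup_ge (fun X => ((hyp.dev x).1 X).2) (fun u hu => (hZ1 u hu).symm)
    have hZt : Z (s + t) = y := by
      have : pshift s Z t = y := by rw [hZ2]; exact hY
      exact this
    calc Px z Y * Px x X = Px x X * Px z Y := mul_comm _ _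
      _ ≤ Px x Z := by
        rw [hm]; exact mul_le_mul_of_nonneg_right hpre ((hyp.dev z).1 Y).1
      _ ≤ _ := by rw [← hZt]; exact le_transDen hyp x (s + t) Z
  · rw [hyp.start z Y hz]; simpa using h0

/-- splitting of paths -/
theorem Px_le_split {Px : S → C(ℝ≥0, S) → ℝ} {A : Set S} (hyp : DevSetup S Px A)
    (x : S) (X : C(ℝ≥0, S)) (s : ℝ≥0) :
    Px x X ≤ transDen Px x s (X s) * Px (X s) (pshift s X) := by
  rw [hyp.markov x X s]
  refine mul_le_mul_of_nonneg_right ?_ ((hyp.dev _).1 _).1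
  refine biSup_le' (transDen_nonneg hyp _ _ _) fun X' hX' => ?_
  rw [← hX' s le_rfl]
  exact le_transDen hyp x s X'

theorem transDen_mono {Px : S → C(ℝ≥0, S) → ℝ} {A : Set S} (hyp : DevSetup S Px A)
    {a : S} (ha : a ∈ A) (y : S) : Monotone fun t => transDen Px a t y := by
  intro t u htu
  have h1 : 1 ≤ transDen Px a (u - t) a := by
    have := le_transDen hyp a (u - t) (ContinuousMap.const ℝ≥0 a)
    rw [hyp.equil a ha] at this
    exact this
  have h2 := transDen_chapman hyp a a y (u - t) t
  rw [tsub_add_cancel_of_le htu] at h2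
  have := transDen_nonneg hyp a t y
  simp only
  nlinarith

theorem transDen_le_PL {Px : S → C(ℝ≥0, S) → ℝ} {A : Set S} (hyp : DevSetup S Px A)
    {PL : S → S → ℝ}
    (hPL : ∀ x y : S, Tendsto (fun t : ℝ≥0 => transDen Px x t y) atTop (𝓝 (PL x y)))
    {a : S} (ha : a ∈ A) (y : S) (t : ℝ≥0) : transDen Px a t y ≤ PL a y :=
  (transDen_mono hyp ha y).ge_of_tendsto (hPL a y) t

/-- limits along an ultrafilter of sequences of paths with start in a compact set -/
theorem path_limit {Px : S → C(ℝ≥0, S) → ℝ} {A : Set S} (hyp : DevSetup S Px A)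
    {K : Set S} (hK : IsCompact K) {γ : ℝ} (hγ : γ ∈ Ioc (0:ℝ) 1)
    (U : Ultrafilter ℕ) (x : ℕ → S) (X : ℕ → C(ℝ≥0, S)) (hx : ∀ᶠ n in (U : Filter ℕ), x n ∈ K)
    (hX : ∀ᶠ n in (U : Filter ℕ), γ ≤ Px (x n) (X n)) :
    ∃ Z : C(ℝ≥0, S), Tendsto X U (𝓝 Z) ∧ Tendsto x U (𝓝 (Z 0)) ∧
      (∀ t, Tendsto (fun n => X n t) U (𝓝 (Z t))) := by
  have hc := hyp.cpt K hK γ hγ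
  obtain ⟨Z, -, hZ⟩ := hc.ultrafilter_le_nhds (U.map X) (by
    rw [le_principal_iff]
    change ∀ᶠ n in (U : Filter ℕ), X n ∈ _
    filter_upwards [hx, hX] with n h1 h2
    exact mem_biUnion h1 h2)
  have hZ' : Tendsto X U (𝓝 Z) := hZ
  have hev : ∀ t, Tendsto (fun n => X n t) U (𝓝 (Z t)) := fun t =>
    ((continuous_eval_const t).tendsto Z).comp hZ'
  refine ⟨Z, hZ', (hev 0).congr' ?_, hev⟩
  filter_upwards [hX] with n h
  by_contra hne
  rw [hyp.start _ _ hne] at h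
  exact absurd h (not_le.2 hγ.1)

theorem rho_usc {ρ : S → ℝ} (h : IsDeviabilityDensity ρ) : UpperSemicontinuous ρ := by
  intro x c hc
  rcases le_or_gt c 1 with h1 | h1
  · have hc0 : 0 < c := lt_of_le_of_lt (h.1 x).1 hc
    have := (h.2.2 c ⟨hc0, h1⟩).isClosed.isOpen_compl.mem_nhds (x := x) (by simpa using hc)
    filter_upwards [this] with y hy
    simpa using hy
  · exact Eventually.of_forall fun y => lt_of_le_of_lt (h.1 y).2 h1

/-- Some segment of a long path is nearly free. -/
theorem exists_cheap_segment {Px : S → C(ℝ≥0, S) → ℝ} {A : Set S} (hyp : DevSetup S Px A)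
    (x : S) (X : C(ℝ≥0, S)) {γ : ℝ} (hγ : 0 < γ) (hX : γ ≤ Px x X) (N : ℕ) (hN : 0 < N)
    (T : ℝ≥0) :
    ∃ j < N, ∃ Z : C(ℝ≥0, S), 1 - 2 / (N * γ) ≤ Px (X (j * T)) Z ∧
      ∀ u ≤ T, Z u = X (j * T + u) := by
  set W : ℕ → ℝ := fun j => Px (X (j * T)) (pshift (j * T) X) with hW
  have hWstep : ∀ j : ℕ, W j = (⨆ X' ∈ {X' : C(ℝ≥0, S) | ∀ u ≤ T, X' u = pshift (j * T) X u},
      Px (X (j * T)) X') * W (j + 1) := by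
    intro j
    have := hyp.markov (X (j * T)) (pshift (j * T) X) T
    have e1 : pshift (j * T) X T = X (((j + 1 : ℕ) : ℝ≥0) * T) := by
      simp only [pshift, ContinuousMap.coe_mk]; congr 1; push_cast; ring
    have e2 : pshift T (pshift (j * T) X) = pshift (((j + 1 : ℕ) : ℝ≥0) * T) X := by
      ext u; simp only [pshift, ContinuousMap.coe_mk]; congr 1; push_cast; ring
    rw [e1, e2] at this
    exact this
  have hx0 : X 0 = x := by
    by_contra hne
    rw [hyp.start x X hne] at hX
    linarith
  have hW0 : γ ≤ W 0 := by
    have : pshift 0 X = X := by ext u; simp [pshift]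
    simp only [hW, Nat.cast_zero, zero_mul, this, hx0]
    exact hX
  have hW1 : ∀ j, W j ≤ 1 := fun j => ((hyp.dev _).1 _).2
  have hWn : ∀ j, 0 ≤ W j := fun j => ((hyp.dev _).1 _).1
  have hpre1 : ∀ j : ℕ, (⨆ X' ∈ {X' : C(ℝ≥0, S) | ∀ u ≤ T, X' u = pshift (j * T) X u},
      Px (X (j * T)) X') ≤ 1 := fun j => biSup_le' zero_le_one fun X' _ => ((hyp.dev _).1 _).2
  have hmono : Monotone W := by
    refine monotone_nat_of_le_succ fun j => ?_
    rw [hWstep j]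
    nlinarith [hpre1 j, hWn (j + 1)]
  have hWγ : ∀ j, γ ≤ W j := fun j => hW0.trans (hmono (Nat.zero_le j))
  have hNr : (0:ℝ) < N := by exact_mod_cast hN
  obtain ⟨j, hj, hd⟩ : ∃ j < N, W (j + 1) - W j ≤ 1 / N := by
    by_contra! hh
    have h1 : ∑ j ∈ Finset.range N, (1 / (N:ℝ)) < ∑ j ∈ Finset.range N, (W (j + 1) - W j) :=
      Finset.sum_lt_sum_of_nonempty (by simpa using hN.ne')
        (fun j hj => hh j (Finset.mem_range.1 hj))
    rw [Finset.sum_range_sub] at h1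
    simp only [Finset.sum_const, Finset.card_range, nsmul_eq_mul] at h1
    rw [mul_one_div_cancel hNr.ne'] at h1
    linarith [hW1 N, hWn 0]
  refine ⟨j, hj, ?_⟩
  by_cases hneg : 1 - 2 / (N * γ) < 0
  · exact ⟨pshift (j * T) X, hneg.le.trans ((hyp.dev _).1 _).1, fun u _ => rfl⟩
  push Not at hneg
  have hkey : 1 - 2 / (N * γ) < ⨆ X' ∈ {X' : C(ℝ≥0, S) | ∀ u ≤ T, X' u = pshift (j * T) X u},
      Px (X (j * T)) X' := by
    by_contra! hle
    have h1 := hWstep j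
    have h2 := mul_le_mul_of_nonneg_right hle (hWn (j + 1))
    rw [← h1] at h2
    have h3 : 2 / N ≤ 2 / (N * γ) * W (j + 1) := by
      have : (2:ℝ) / N = 2 / (N * γ) * γ := by field_simp
      rw [this]
      exact mul_le_mul_of_nonneg_left (hWγ _) (by positivity)
    have h4 : (0:ℝ) < 1 / N := by positivity
    have h5 : (2:ℝ) / N = 1 / N + 1 / N := by ring
    nlinarith
  obtain ⟨Z, hZ1, hZ2⟩ := exists_of_lt_biSup hneg hkey
  exact ⟨Z, hZ2.le, fun u hu => hZ1 u hu⟩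

/-- The main path argument. -/
theorem rho_le_flux {Px : S → C(ℝ≥0, S) → ℝ} {A : Set S} (hyp : DevSetup S Px A)
    {PL : S → S → ℝ}
    (hPL : ∀ x y : S, Tendsto (fun t : ℝ≥0 => transDen Px x t y) atTop (𝓝 (PL x y)))
    {ρ : S → ℝ} (hρdev : IsDeviabilityDensity ρ)
    (hge : ∀ x y t, ρ x * transDen Px x t y ≤ ρ y)
    (hle : ∀ y t c, 0 < c → c < ρ y → ∃ x, ∃ X : C(ℝ≥0, S), X t = y ∧ c ≤ ρ x * Px x X)
    (y : S) (γ : ℝ) (hγ : 0 < γ) (hγy : γ < ρ y) (ε : ℝ) (hε : 0 < ε) (hε1 : ε < 1) :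
    ∃ a ∈ A, (1 - ε) * (1 - ε) * γ ≤ ρ a * PL a y := by
  have hρ0 : ∀ x, 0 ≤ ρ x := fun x => (hρdev.1 x).1
  have hρ1 : ∀ x, ρ x ≤ 1 := fun x => (hρdev.1 x).2
  have hγ1 : γ ≤ 1 := hγy.le.trans (hρ1 y)
  have hP0 : ∀ x X, 0 ≤ Px x X := fun x X => ((hyp.dev x).1 X).1
  have hP1 : ∀ x X, Px x X ≤ 1 := fun x X => ((hyp.dev x).1 X).2
  choose x X hXy hXc using fun t => hle y t γ hγ hγy
  -- value along the path
  have hstep : ∀ t s, γ ≤ ρ (X t s) * Px (X t s) (pshift s (X t)) := by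
    intro t s
    refine (hXc t).trans ?_
    have h1 := Px_le_split hyp (x t) (X t) s
    have h2 := hge (x t) (X t s) s
    have h3 := mul_le_mul_of_nonneg_left h1 (hρ0 (x t))
    have h4 := mul_le_mul_of_nonneg_right h2 (hP0 (X t s) (pshift s (X t)))
    nlinarith
  have hin : ∀ t s, γ ≤ ρ (X t s) := fun t s =>
    (hstep t s).trans (mul_le_of_le_one_right (hρ0 _) (hP1 _ _))
  have hPx : ∀ t, γ ≤ Px (x t) (X t) := fun t =>
    (hXc t).trans (mul_le_of_le_one_left (hP0 _ _) (hρ1 _))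
  have hseg := fun n : ℕ => exists_cheap_segment hyp (x ((n + 1 : ℕ) * (n + 1 : ℕ)))
    (X ((n + 1 : ℕ) * (n + 1 : ℕ))) hγ (hPx _) (n + 1) n.succ_pos ((n + 1 : ℕ) : ℝ≥0)
  choose j hj Z hZ1 hZ2 using hseg
  set t : ℕ → ℝ≥0 := fun n => ((n + 1 : ℕ) : ℝ≥0) * ((n + 1 : ℕ) : ℝ≥0) with ht
  set U : Ultrafilter ℕ := hyperfilter ℕ
  have hU : (U : Filter ℕ) ≤ atTop := by
    rw [← Nat.cofinite_eq_atTop]; exact hyperfilter_le_cofinite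
  have hlim : Tendsto (fun n : ℕ => 1 - 2 / (((n + 1 : ℕ) : ℝ) * γ)) atTop (𝓝 1) := by
    have h1 : Tendsto (fun n : ℕ => ((n + 1 : ℕ) : ℝ) * γ) atTop atTop :=
      ((tendsto_natCast_atTop_atTop.comp (tendsto_add_atTop_nat 1))).atTop_mul_const hγ
    have h2 := h1.const_div_atTop 2
    simpa using h2.const_sub 1
  have hcheap : ∀ c < (1:ℝ), ∀ᶠ n in (U : Filter ℕ),
      c < Px (X (t n) (j n * ((n + 1 : ℕ) : ℝ≥0))) (Z n) := by
    intro c hc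
    filter_upwards [hU (hlim.eventually (lt_mem_nhds hc))] with n hn
    exact lt_of_lt_of_le hn (hZ1 n)
  obtain ⟨Y, hY1, hY2, hY3⟩ := path_limit hyp (hρdev.2.2 γ ⟨hγ, hγ1⟩) (γ := 1/2)
    (by constructor <;> norm_num) U (fun n => X (t n) (j n * ((n + 1 : ℕ) : ℝ≥0))) Z
    (Eventually.of_forall fun n => hin _ _)
    ((hcheap (1/2) (by norm_num)).mono fun n h => h.le)
  have hY : Px (Y 0) Y = 1 := by
    refine le_antisymm (hP1 _ _) ?_
    by_contra! hlt
    have h1 := hyp.usc (Y 0, Y)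
    obtain ⟨c, hc1, hc2⟩ := exists_between hlt
    have h2 := (hY2.prodMk_nhds hY1).eventually (h1 c hc1)
    obtain ⟨n, hn1, hn2⟩ := (h2.and (hcheap c hc2)).exists
    exact lt_asymm hn1 hn2
  obtain ⟨δ, hδ, hA⟩ := hyp.nearA ε hε
  obtain ⟨τ, hτ⟩ : ∃ τ : ℝ≥0, infDist (Y τ) A < δ := by
    apply exists_lt_of_ciInf_lt
    rw [hyp.attract _ _ hY]
    exact hδ
  have hev1 : ∀ᶠ n in (U : Filter ℕ), infDist (Z n τ) A < δ :=
    ((continuous_infDist_pt A).tendsto (Y τ)).comp (hY3 τ) |>.eventually (gt_mem_nhds hτ)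
  have hev2 : ∀ᶠ n in (U : Filter ℕ), τ ≤ ((n + 1 : ℕ) : ℝ≥0) := by
    refine hU ?_
    exact (tendsto_natCast_atTop_atTop.comp (tendsto_add_atTop_nat 1)).eventually
      (eventually_ge_atTop τ)
  obtain ⟨n, hn1, hn2⟩ := (hev1.and hev2).exists
  set s : ℝ≥0 := j n * ((n + 1 : ℕ) : ℝ≥0) + τ with hs
  have hst : s ≤ t n := by
    have h1 : (j n : ℝ≥0) + 1 ≤ ((n + 1 : ℕ) : ℝ≥0) := by exact_mod_cast hj n
    calc s ≤ j n * ((n + 1 : ℕ) : ℝ≥0) + ((n + 1 : ℕ) : ℝ≥0) := by rw [hs]; gcongr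
      _ = ((j n : ℝ≥0) + 1) * ((n + 1 : ℕ) : ℝ≥0) := by ring
      _ ≤ t n := mul_le_mul_left h1 _
  have hz : Z n τ = X (t n) s := hZ2 n τ hn2
  rw [hz] at hn1
  obtain ⟨s₀, s₁, -, -, a, ha, h1, h2⟩ := hA _ hn1
  refine ⟨a, ha, ?_⟩
  set z := X (t n) s
  have h3 : γ ≤ ρ z * transDen Px z (t n - s) y := by
    refine (hstep (t n) s).trans (mul_le_mul_of_nonneg_left ?_ (hρ0 _))
    have := le_transDen hyp z (t n - s) (pshift s (X (t n)))
    have e : pshift s (X (t n)) (t n - s) = y := by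
      simp only [pshift, ContinuousMap.coe_mk]
      rw [add_tsub_cancel_of_le hst]; exact hXy _
    rwa [e] at this
  have h4 : (1 - ε) * ρ z ≤ ρ a := by
    refine le_trans ?_ (hge z a s₀)
    rw [mul_comm]
    exact mul_le_mul_of_nonneg_left h1.le (hρ0 z)
  have h5 : (1 - ε) * transDen Px z (t n - s) y ≤ PL a y := by
    refine le_trans ?_ ((transDen_chapman hyp a z y s₁ (t n - s)).trans
      (transDen_le_PL hyp hPL ha y _))
    exact mul_le_mul_of_nonneg_right h2.le (transDen_nonneg hyp _ _ _)
  have h6 : (0:ℝ) ≤ 1 - ε := by linarith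
  calc (1 - ε) * (1 - ε) * γ ≤ (1 - ε) * (1 - ε) * (ρ z * transDen Px z (t n - s) y) := by gcongr
    _ = ((1 - ε) * ρ z) * ((1 - ε) * transDen Px z (t n - s) y) := by ring
    _ ≤ ρ a * PL a y := mul_le_mul h4 h5 (mul_nonneg h6 (transDen_nonneg hyp _ _ _)) (hρ0 a)

/-- bump function at `y` -/
def bumpAt (y : S) (k : ℕ) (x : S) : ℝ := max (1 - ((k:ℝ) + 1) * dist x y) 0

theorem bumpAt_continuous (y : S) (k : ℕ) : Continuous (bumpAt y k) := by
  unfold bumpAt; fun_prop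

theorem bumpAt_nonneg (y : S) (k : ℕ) (x : S) : 0 ≤ bumpAt y k x := le_max_right _ _

theorem bumpAt_le_one (y : S) (k : ℕ) (x : S) : bumpAt y k x ≤ 1 := by
  refine max_le ?_ zero_le_one
  have : 0 ≤ ((k:ℝ) + 1) * dist x y := by positivity
  linarith

theorem bumpAt_self (y : S) (k : ℕ) : bumpAt y k y = 1 := by simp [bumpAt]

theorem bumpAt_support (y : S) (k : ℕ) (x : S) (h : 0 < bumpAt y k x) :
    dist x y < 1 / ((k:ℝ) + 1) := by
  by_contra! hle
  rw [div_le_iff₀ (by positivity)] at hle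
  have : bumpAt y k x = 0 := max_eq_right (by linarith)
  linarith

/-- Sequential continuous convergence implies convergence along the product filter. -/
theorem cont_conv {g : ℕ → S → ℝ} {x : S} {l : ℝ}
    (h : ∀ xs : ℕ → S, Tendsto xs atTop (𝓝 x) → Tendsto (fun n => g n (xs n)) atTop (𝓝 l)) :
    Tendsto (fun q : ℕ × S => g q.1 q.2) (atTop ×ˢ 𝓝 x) (𝓝 l) := by
  by_contra hnot
  rw [not_tendsto_iff_exists_frequently_notMem] at hnot
  obtain ⟨V, hV, hfr⟩ := hnot
  have hP : ∀ k : ℕ, ∃ᶠ n in atTop, ∃ y, dist y x < 1 / ((k:ℝ) + 1) ∧ g n y ∉ V := by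
    intro k hk
    refine hfr ?_
    have hb : ∀ᶠ y in 𝓝 x, dist y x < 1 / ((k:ℝ) + 1) := ball_mem_nhds x (by positivity)
    filter_upwards [hk.prod_mk hb] with q hq hq2
    exact hq.1 ⟨q.2, hq.2, hq2⟩
  obtain ⟨ψ, hψ, hψ2⟩ := extraction_forall_of_frequently hP
  choose y hy1 hy2 using hψ2
  have hxs : Tendsto (Function.extend ψ y fun _ => x) atTop (𝓝 x) := by
    rw [Metric.tendsto_atTop]
    intro ε hε
    obtain ⟨K, hK⟩ := exists_nat_one_div_lt hε
    refine ⟨ψ K, fun n hn => ?_⟩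
    by_cases hr : ∃ k, ψ k = n
    · obtain ⟨k, rfl⟩ := hr
      rw [hψ.injective.extend_apply]
      have hkK : K ≤ k := hψ.le_iff_le.1 hn
      refine (hy1 k).trans_le (le_trans ?_ hK.le)
      gcongr
    · rw [Function.extend_apply' _ _ _ hr]; simpa using hε
  have h2 := (h _ hxs).comp hψ.tendsto_atTop
  obtain ⟨k, hk⟩ := (h2.eventually hV).exists
  simp only [Function.comp, hψ.injective.extend_apply] at hk
  exact hy2 k hk

theorem cont_conv_loc {g : ℕ → S → ℝ} {G : S → ℝ}
    (h : ∀ x, ∀ xs : ℕ → S, Tendsto xs atTop (𝓝 x) →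
      Tendsto (fun n => g n (xs n)) atTop (𝓝 (G x))) :
    Continuous G ∧ ∀ x, ∀ ε > 0, ∀ᶠ q : ℕ × S in atTop ×ˢ 𝓝 x, |g q.1 q.2 - G q.2| < ε := by
  have hG : Continuous G := by
    rw [continuous_iff_continuousAt]
    intro x
    rw [ContinuousAt, Metric.tendsto_nhds]
    intro ε hε
    have h1 := (Metric.tendsto_nhds.1 (cont_conv (h x))) (ε / 2) (by positivity)
    rw [eventually_prod_iff] at h1
    obtain ⟨pa, ha, pb, hb, hab⟩ := h1
    filter_upwards [hb] with y hy
    have h2 : Tendsto (fun n => g n y) atTop (𝓝 (G y)) := h y (fun _ => y) tendsto_const_nhds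
    have h3 : dist (G y) (G x) ≤ ε / 2 :=
      le_of_tendsto (h2.dist tendsto_const_nhds) (ha.mono fun n hn => (hab hn hy).le)
    linarith
  refine ⟨hG, fun x ε hε => ?_⟩
  have h1 := cont_conv (h x)
  have h2 : Tendsto (fun q : ℕ × S => G q.2) (atTop ×ˢ 𝓝 x) (𝓝 (G x)) :=
    (hG.tendsto x).comp tendsto_snd
  have h3 := (h1.sub h2)
  rw [sub_self] at h3
  have := Metric.tendsto_nhds.1 h3 ε hε
  simpa [Real.dist_eq] using this

variable [MeasurableSpace S] [BorelSpace S]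

theorem integrable_pow_of_bdd {S : Type*} [MeasurableSpace S] (μ : Measure S) [IsFiniteMeasure μ] {f : S → ℝ}
    (hf : Measurable f) {M : ℝ} (h0 : ∀ x, 0 ≤ f x) (h1 : ∀ x, f x ≤ M) (n : ℕ) :
    Integrable (fun x => f x ^ n) μ := by
  refine Integrable.of_bound (hf.pow_const n).aestronglyMeasurable (M ^ n)
    (Eventually.of_forall fun x => ?_)
  rw [Real.norm_of_nonneg (pow_nonneg (h0 x) n)]
  exact pow_le_pow_left₀ (h0 x) (h1 x) n

theorem ld_integral_inv (κ : ProbabilityTheory.Kernel S S) [ProbabilityTheory.IsMarkovKernel κ]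
    (P : Measure S) [IsProbabilityMeasure P]
    (hinv : ∀ Γ : Set S, MeasurableSet Γ → P Γ = ∫⁻ x, κ x Γ ∂P)
    (F : S → ℝ) (hF : Integrable F P) : ∫ x, F x ∂P = ∫ x, ∫ y, F y ∂(κ x) ∂P := by
  have hb : P.bind κ = P := by
    ext s hs
    rw [Measure.bind_apply hs κ.aemeasurable, hinv s hs]
  have he : (ProbabilityTheory.Kernel.comp κ (ProbabilityTheory.Kernel.const Unit P)) () = P := by
    rw [ProbabilityTheory.Kernel.comp_apply, ProbabilityTheory.Kernel.const_apply, hb]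
  have := ProbabilityTheory.Kernel.integral_comp (η := κ)
    (κ := ProbabilityTheory.Kernel.const Unit P) (a := ()) (f := F) (by rw [he]; exact hF)
  rw [he, ProbabilityTheory.Kernel.const_apply] at this
  exact this

/-- Comparing integrals of powers -/
theorem root_mono (μ : Measure S) [IsFiniteMeasure μ] {f g : S → ℝ} (n : ℕ)
    (hf : Measurable f) (hg : Measurable g) {M : ℝ}
    (h0 : ∀ x, 0 ≤ f x) (hfg : ∀ x, f x ≤ g x) (h1 : ∀ x, g x ≤ M) :
    (∫ x, f x ^ n ∂μ) ^ ((n : ℝ)⁻¹) ≤ (∫ x, g x ^ n ∂μ) ^ ((n : ℝ)⁻¹) := by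
  refine Real.rpow_le_rpow (integral_nonneg fun x => pow_nonneg (h0 x) n) ?_ (by positivity)
  exact integral_mono
    (integrable_pow_of_bdd μ hf h0 (fun x => (hfg x).trans (h1 x)) n)
    (integrable_pow_of_bdd μ hg (fun x => (h0 x).trans (hfg x)) h1 n)
    fun x => pow_le_pow_left₀ (h0 x) (hfg x) n

theorem ld_inv_sup (κ : ℕ → ProbabilityTheory.Kernel S S)
    (hκ : ∀ n, ProbabilityTheory.IsMarkovKernel (κ n))
    (P : ℕ → Measure S) (hP : ∀ n, IsProbabilityMeasure (P n))
    (hinv : ∀ n (Γ : Set S), MeasurableSet Γ → P n Γ = ∫⁻ x, κ n x Γ ∂(P n))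
    (T : S → S → ℝ) (hT0 : ∀ x y, 0 ≤ T x y) (hT1 : ∀ x y, T x y ≤ 1)
    (hκLD : ∀ (x : S) (xs : ℕ → S), Tendsto xs atTop (𝓝 x) →
      LDConv (fun n => κ n (xs n)) (fun n => n) (fun y => T x y))
    (ρ : S → ℝ) (hρdev : IsDeviabilityDensity ρ)
    (φ : ℕ → ℕ) (hφ : StrictMono φ)
    (hρ : LDConv (fun k => P (φ k)) φ ρ)
    (f : S → ℝ) (hf : Continuous f) (hf0 : ∀ x, 0 ≤ f x) (hf1 : ∀ x, f x ≤ 1) :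
    ∀ γ, 0 < γ → γ < 1 →
    (⨆ x, f x * ρ x) ≤ (⨆ x, (⨆ y, f y * T x y) * ρ x) + 2 * γ ∧
    (⨆ x, (⨆ y, f y * T x y) * ρ x) ≤ (⨆ x, f x * ρ x) + 2 * γ := by
  intro γ hγ hγ1
  have hρ0 : ∀ x, 0 ≤ ρ x := fun x => (hρdev.1 x).1
  have hρ1 : ∀ x, ρ x ≤ 1 := fun x => (hρdev.1 x).2
  set G : S → ℝ := fun x => ⨆ y, f y * T x y with hG
  set g : ℕ → S → ℝ := fun n x => (∫ y, f y ^ n ∂(κ n x)) ^ ((n : ℝ)⁻¹) with hg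
  have hG0 : ∀ x, 0 ≤ G x := fun x => Real.iSup_nonneg fun y => mul_nonneg (hf0 y) (hT0 x y)
  have hG1 : ∀ x, G x ≤ 1 := fun x => Real.iSup_le
    (fun y => mul_le_one₀ (hf1 y) (hT0 x y) (hT1 x y)) zero_le_one
  have hfb : BddAbove (range f) := ⟨1, by rintro _ ⟨y, rfl⟩; exact hf1 y⟩
  obtain ⟨hGc, hloc⟩ := cont_conv_loc (g := g) (G := G)
    fun x xs hxs => hκLD x xs hxs f hf hf0 hfb
  have hI0 : ∀ n x, 0 ≤ ∫ y, f y ^ n ∂(κ n x) := fun n x =>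
    integral_nonneg fun y => pow_nonneg (hf0 y) n
  have hI1 : ∀ n x, ∫ y, f y ^ n ∂(κ n x) ≤ 1 := fun n x => by
    have := integral_mono (integrable_pow_of_bdd (κ n x) hf.measurable hf0 hf1 n)
      (integrable_const (1:ℝ)) (fun y => pow_le_one₀ (hf0 y) (hf1 y))
    simpa using this
  have hg0 : ∀ n x, 0 ≤ g n x := fun n x => Real.rpow_nonneg (hI0 n x) _
  have hg1 : ∀ n x, g n x ≤ 1 := fun n x => Real.rpow_le_one (hI0 n x) (hI1 n x) (by positivity)
  have hgm : ∀ n, Measurable (g n) := fun n => by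
    have : StronglyMeasurable fun x => ∫ y, f y ^ n ∂(κ n x) :=
      ((hf.measurable.pow_const n).stronglyMeasurable).integral_kernel
    exact this.measurable.pow_const _
  -- the identity of integrals
  have hid : ∀ n, n ≠ 0 → ∫ x, f x ^ n ∂(P n) = ∫ x, g n x ^ n ∂(P n) := by
    intro n hn
    rw [ld_integral_inv (κ n) (P n) (hinv n) _ (integrable_pow_of_bdd (P n) hf.measurable hf0 hf1 n)]
    congr 1
    ext x
    exact (Real.rpow_inv_natCast_pow (hI0 n x) hn).symm
  -- uniform approximation near the compact set
  have hK : IsCompact {x | γ ≤ ρ x} := hρdev.2.2 γ ⟨hγ, hγ1.le⟩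
  have hev := hK.mem_prod_nhdsSet_of_forall (l := (atTop : Filter ℕ))
    (s := {q | |g q.1 q.2 - G q.2| < γ}) (fun x _ => hloc x γ hγ)
  obtain ⟨pa, ha, pb, hb, hab⟩ := eventually_prod_iff.1 (show ∀ᶠ q : ℕ × S in atTop ×ˢ 𝓝ˢ _,
    |g q.1 q.2 - G q.2| < γ from hev)
  obtain ⟨V, hVo, hKV, hVb⟩ := mem_nhdsSet_iff_exists.1 hb
  obtain ⟨h, hh0, hh1, hh2⟩ := exists_continuous_zero_one_of_isClosed hK.isClosed
    hVo.isClosed_compl (disjoint_compl_right_iff_subset.2 hKV)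
  have hfl := hρ f hf hf0 hfb
  have hρfb : ∀ {F : S → ℝ} {M : ℝ}, (∀ x, 0 ≤ F x) → (∀ x, F x ≤ M) →
      BddAbove (range fun x => F x * ρ x) := by
    intro F M h0 h1
    refine ⟨M, ?_⟩
    rintro _ ⟨x, rfl⟩
    exact (mul_le_of_le_one_right (h0 x) (hρ1 x)).trans (h1 x)
  have hev2 : ∀ᶠ k in atTop, pa (φ k) ∧ φ k ≠ 0 :=
    hφ.tendsto_atTop.eventually (ha.and (eventually_ne_atTop 0))
  have hsG0 : 0 ≤ ⨆ x, G x * ρ x := Real.iSup_nonneg fun x => mul_nonneg (hG0 x) (hρ0 x)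
  have hsf0 : 0 ≤ ⨆ x, f x * ρ x := Real.iSup_nonneg fun x => mul_nonneg (hf0 x) (hρ0 x)
  constructor
  · set F : S → ℝ := fun x => G x + γ + h x with hF
    have hFc : Continuous F := (hGc.add continuous_const).add h.continuous
    have hF0 : ∀ x, 0 ≤ F x := fun x => by
      have := hG0 x; have := (hh2 x).1; simp only [hF]; positivity
    have hF3 : ∀ x, F x ≤ 3 := fun x => by
      have := hG1 x; have := (hh2 x).2; simp only [hF]; linarith
    have hFl := hρ F hFc hF0 ⟨3, by rintro _ ⟨y, rfl⟩; exact hF3 y⟩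
    have hcmp : (⨆ x, f x * ρ x) ≤ ⨆ x, F x * ρ x := by
      refine le_of_tendsto_of_tendsto hfl hFl ?_
      filter_upwards [hev2] with k hk
      rw [hid _ hk.2]
      refine root_mono (P (φ k)) (φ k) (hgm _) hFc.measurable (hg0 _) (fun x => ?_) hF3
      simp only [hF]
      by_cases hx : x ∈ V
      · have := (abs_lt.1 (hab hk.1 (hVb hx))).2
        have := (hh2 x).1
        simp only at *
        linarith
      · have h1 : h x = 1 := hh1 hx
        rw [h1]
        linarith [hg1 (φ k) x, hG0 x]
    refine hcmp.trans (Real.iSup_le (fun x => ?_) (by positivity))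
    have h1 : G x * ρ x ≤ ⨆ x, G x * ρ x := le_ciSup (hρfb hG0 hG1) x
    have h2 : h x * ρ x ≤ γ := by
      by_cases hx : γ ≤ ρ x
      · have : h x = 0 := hh0 hx
        rw [this]; linarith
      · exact (mul_le_of_le_one_left (hρ0 x) (hh2 x).2).trans (not_le.1 hx).le
    have h3 : γ * ρ x ≤ γ := mul_le_of_le_one_right hγ.le (hρ1 x)
    simp only [hF]
    nlinarith
  · set F : S → ℝ := fun x => max (G x - γ - h x) 0 with hF
    have hFc : Continuous F := ((hGc.sub continuous_const).sub h.continuous).max continuous_const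
    have hF0 : ∀ x, 0 ≤ F x := fun x => le_max_right _ _
    have hF3 : ∀ x, F x ≤ 1 := fun x => by
      have := hG1 x; have := (hh2 x).1
      exact max_le (by linarith) zero_le_one
    have hFl := hρ F hFc hF0 ⟨1, by rintro _ ⟨y, rfl⟩; exact hF3 y⟩
    have hcmp : (⨆ x, F x * ρ x) ≤ ⨆ x, f x * ρ x := by
      refine le_of_tendsto_of_tendsto hFl hfl ?_
      filter_upwards [hev2] with k hk
      rw [hid _ hk.2]
      refine root_mono (P (φ k)) (φ k) hFc.measurable (hgm _) hF0 (fun x => ?_) (hg1 _)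
      refine max_le ?_ (hg0 _ _)
      by_cases hx : x ∈ V
      · have := (abs_lt.1 (hab hk.1 (hVb hx))).1
        have := (hh2 x).1
        simp only at *
        linarith
      · have h1 : h x = 1 := hh1 hx
        rw [h1]
        linarith [hg0 (φ k) x, hG1 x]
    refine Real.iSup_le (fun x => ?_) (by positivity)
    have h1 : F x * ρ x ≤ ⨆ x, f x * ρ x := (le_ciSup (hρfb hF0 hF3) x).trans hcmp
    by_cases hx : γ ≤ ρ x
    · have h4 : h x = 0 := hh0 hx
      have h2 : G x - γ ≤ F x := by
        have := le_max_left (G x - γ - h x) 0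
        rw [h4] at this
        simp only [hF, h4]
        linarith
      have h3 : γ * ρ x ≤ γ := mul_le_of_le_one_right hγ.le (hρ1 x)
      have h5 := mul_le_mul_of_nonneg_right h2 (hρ0 x)
      nlinarith
    · have := mul_le_of_le_one_left (hρ0 x) (hG1 x)
      push Not at hx
      linarith

theorem ld_inv_sup_eq (κ : ℕ → ProbabilityTheory.Kernel S S)
    (hκ : ∀ n, ProbabilityTheory.IsMarkovKernel (κ n))
    (P : ℕ → Measure S) (hP : ∀ n, IsProbabilityMeasure (P n))
    (hinv : ∀ n (Γ : Set S), MeasurableSet Γ → P n Γ = ∫⁻ x, κ n x Γ ∂(P n))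
    (T : S → S → ℝ) (hT0 : ∀ x y, 0 ≤ T x y) (hT1 : ∀ x y, T x y ≤ 1)
    (hκLD : ∀ (x : S) (xs : ℕ → S), Tendsto xs atTop (𝓝 x) →
      LDConv (fun n => κ n (xs n)) (fun n => n) (fun y => T x y))
    (ρ : S → ℝ) (hρdev : IsDeviabilityDensity ρ)
    (φ : ℕ → ℕ) (hφ : StrictMono φ)
    (hρ : LDConv (fun k => P (φ k)) φ ρ)
    (f : S → ℝ) (hf : Continuous f) (hf0 : ∀ x, 0 ≤ f x) (hf1 : ∀ x, f x ≤ 1) :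
    (⨆ x, f x * ρ x) = ⨆ x, (⨆ y, f y * T x y) * ρ x := by
  have h := ld_inv_sup κ hκ P hP hinv T hT0 hT1 hκLD ρ hρdev φ hφ hρ f hf hf0 hf1
  have key : ∀ a b : ℝ, (∀ γ, 0 < γ → γ < 1 → a ≤ b + 2 * γ) → a ≤ b := by
    intro a b hab
    refine le_of_forall_pos_le_add fun ε hε => ?_
    have := hab (min (ε / 2) (1 / 2)) (by positivity)
      (lt_of_le_of_lt (min_le_right _ _) (by norm_num))
    linarith [min_le_left (ε / 2) (1 / 2)]
  exact le_antisymm (key _ _ fun γ h1 h2 => (h γ h1 h2).1) (key _ _ fun γ h1 h2 => (h γ h1 h2).2)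

end helpers

theorem stmt9
    (Px : S → C(ℝ≥0, S) → ℝ) (A : Set S) (hyp : DevSetup S Px A)
    (PL : S → S → ℝ)
    (hPL : ∀ x y : S, Tendsto (fun t : ℝ≥0 => transDen Px x t y) atTop (𝓝 (PL x y)))
    (κ : ℕ → ℝ≥0 → ProbabilityTheory.Kernel S S)
    (hκ : ∀ n t, ProbabilityTheory.IsMarkovKernel (κ n t))
    (P : ℕ → Measure S) (hP : ∀ n, IsProbabilityMeasure (P n))
    (hinv : ∀ n (t : ℝ≥0) (Γ : Set S), MeasurableSet Γ →
      P n Γ = ∫⁻ x, κ n t x Γ ∂(P n))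
    (hκLD : ∀ (t : ℝ≥0) (x : S) (xs : ℕ → S), Tendsto xs atTop (𝓝 x) →
      LDConv (fun n => κ n t (xs n)) (fun n => n) (fun y => transDen Px x t y))
    (ρ : S → ℝ) (hρdev : IsDeviabilityDensity ρ)
    (φ : ℕ → ℕ) (hφ : StrictMono φ)
    (hρ : LDConv (fun k => P (φ k)) φ ρ) :
    (∀ x : S, ρ x = ⨆ a ∈ A, ρ a * PL a x) ∧ (⨆ a ∈ A, ρ a) = 1 := by
  have hρ0 : ∀ x, 0 ≤ ρ x := fun x => (hρdev.1 x).1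
  have hρ1 : ∀ x, ρ x ≤ 1 := fun x => (hρdev.1 x).2
  have hP0 : ∀ x X, 0 ≤ Px x X := fun x X => ((hyp.dev x).1 X).1
  have hP1 : ∀ x X, Px x X ≤ 1 := fun x X => ((hyp.dev x).1 X).2
  have hT0 := transDen_nonneg hyp
  have hT1 := transDen_le_one hyp
  have hsup : ∀ (t : ℝ≥0) (y : S) (k : ℕ), (⨆ x, bumpAt y k x * ρ x) =
      ⨆ x, (⨆ z, bumpAt y k z * transDen Px x t z) * ρ x := fun t y k =>
    ld_inv_sup_eq (fun n => κ n t) (fun n => hκ n t) P hP (fun n => hinv n t)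
      (fun x z => transDen Px x t z) (fun x z => hT0 x t z) (fun x z => hT1 x t z)
      (fun x xs hxs => hκLD t x xs hxs) ρ hρdev φ hφ hρ (bumpAt y k) (bumpAt_continuous y k)
      (bumpAt_nonneg y k) (bumpAt_le_one y k)
  have hin1 : ∀ t y k x z, bumpAt y k z * transDen Px x t z ≤ 1 := fun t y k x z =>
    mul_le_one₀ (bumpAt_le_one y k z) (hT0 x t z) (hT1 x t z)
  have hin0 : ∀ t y k x, 0 ≤ ⨆ z, bumpAt y k z * transDen Px x t z := fun t y k x =>
    Real.iSup_nonneg fun z => mul_nonneg (bumpAt_nonneg y k z) (hT0 x t z)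
  have hin2 : ∀ t y k x, (⨆ z, bumpAt y k z * transDen Px x t z) ≤ 1 := fun t y k x =>
    Real.iSup_le (fun z => hin1 t y k x z) zero_le_one
  have hge : ∀ x y t, ρ x * transDen Px x t y ≤ ρ y := by
    intro x y t
    refine le_of_forall_gt_imp_ge_of_dense fun c hc => ?_
    obtain ⟨r, hr, hball⟩ := Metric.eventually_nhds_iff.1 (rho_usc hρdev y c hc)
    obtain ⟨k, hk⟩ := exists_nat_one_div_lt hr
    have h1 : (⨆ x, bumpAt y k x * ρ x) ≤ c := by
      refine Real.iSup_le (fun z => ?_) ((hρ0 y).trans hc.le)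
      rcases (bumpAt_nonneg y k z).eq_or_lt with h0 | h0
      · rw [← h0, zero_mul]; exact (hρ0 y).trans hc.le
      · exact (mul_le_of_le_one_left (hρ0 z) (bumpAt_le_one y k z)).trans
          (hball ((bumpAt_support y k z h0).trans hk)).le
    rw [hsup t y k] at h1
    have h2 : transDen Px x t y ≤ ⨆ z, bumpAt y k z * transDen Px x t z := by
      have := le_ciSup (f := fun z => bumpAt y k z * transDen Px x t z)
        ⟨1, by rintro _ ⟨z, rfl⟩; exact hin1 t y k x z⟩ y
      simpa [bumpAt_self] using this
    have h3 := le_ciSup (f := fun x => (⨆ z, bumpAt y k z * transDen Px x t z) * ρ x)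
        ⟨1, by rintro _ ⟨z, rfl⟩; exact mul_le_one₀ (hin2 t y k z) (hρ0 z) (hρ1 z)⟩ x
    have h4 := mul_le_mul_of_nonneg_right h2 (hρ0 x)
    linarith
  have hle : ∀ y t c, 0 < c → c < ρ y →
      ∃ x, ∃ X : C(ℝ≥0, S), X t = y ∧ c ≤ ρ x * Px x X := by
    intro y t c hc hcy
    have hc1 : c ≤ 1 := hcy.le.trans (hρ1 y)
    have hex : ∀ k : ℕ, ∃ x, ∃ X : C(ℝ≥0, S), dist (X t) y < 1 / ((k:ℝ) + 1) ∧
        c < ρ x * Px x X := by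
      intro k
      have h1 : c < ⨆ x, bumpAt y k x * ρ x := by
        have := le_ciSup (f := fun x => bumpAt y k x * ρ x)
          ⟨1, by rintro _ ⟨z, rfl⟩; exact mul_le_one₀ (bumpAt_le_one y k z) (hρ0 z) (hρ1 z)⟩ y
        simp only [bumpAt_self, one_mul] at this
        exact hcy.trans_le this
      rw [hsup t y k] at h1
      obtain ⟨x, hx⟩ : ∃ x, c < (⨆ z, bumpAt y k z * transDen Px x t z) * ρ x := by
        by_contra! hh
        exact absurd (Real.iSup_le hh hc.le) (not_le.2 h1)
      have hρx : 0 < ρ x := by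
        rcases (hρ0 x).eq_or_lt with h0 | h0
        · rw [← h0] at hx; linarith
        · exact h0
      rw [← div_lt_iff₀ hρx] at hx
      have hcd : 0 < c / ρ x := by positivity
      obtain ⟨z, hz⟩ : ∃ z, c / ρ x < bumpAt y k z * transDen Px x t z := by
        by_contra! hh
        exact absurd (Real.iSup_le hh hcd.le) (not_le.2 hx)
      have hb : 0 < bumpAt y k z := by
        rcases (bumpAt_nonneg y k z).eq_or_lt with h0 | h0
        · rw [← h0] at hz; linarith
        · exact h0
      have hz2 : c / ρ x < transDen Px x t z :=
        hz.trans_le (mul_le_of_le_one_left (hT0 x t z) (bumpAt_le_one y k z))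
      obtain ⟨X, hX1, hX2⟩ := exists_of_lt_biSup hcd.le hz2
      refine ⟨x, X, ?_, ?_⟩
      · have : X t = z := hX1
        rw [this]; exact bumpAt_support y k z hb
      · rw [div_lt_iff₀ hρx] at hX2
        linarith
    choose x X hd hX using hex
    set U : Ultrafilter ℕ := hyperfilter ℕ
    have hU : (U : Filter ℕ) ≤ atTop := by
      rw [← Nat.cofinite_eq_atTop]; exact hyperfilter_le_cofinite
    obtain ⟨Y, hY1, hY2, hY3⟩ := path_limit hyp (hρdev.2.2 c ⟨hc, hc1⟩) (γ := c) ⟨hc, hc1⟩ U x X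
      (Eventually.of_forall fun n => (hX n).le.trans (mul_le_of_le_one_right (hρ0 _) (hP1 _ _)))
      (Eventually.of_forall fun n => (hX n).le.trans (mul_le_of_le_one_left (hP0 _ _) (hρ1 _)))
    refine ⟨Y 0, Y, ?_, ?_⟩
    · refine tendsto_nhds_unique (hY3 t) ?_
      have h1 : Tendsto (fun n => X n t) atTop (𝓝 y) := by
        rw [tendsto_iff_dist_tendsto_zero]
        exact squeeze_zero (fun n => dist_nonneg) (fun n => (hd n).le)
          tendsto_one_div_add_atTop_nhds_zero_nat
      exact h1.mono_left hU
    · by_contra! hlt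
      have hcont : Tendsto (fun e : ℝ => (ρ (Y 0) + e) * (Px (Y 0) Y + e)) (𝓝[>] 0)
          (𝓝 ((ρ (Y 0) + 0) * (Px (Y 0) Y + 0))) := by
        refine Tendsto.mono_left (Continuous.tendsto (by fun_prop) 0) nhdsWithin_le_nhds
      rw [add_zero, add_zero] at hcont
      obtain ⟨e, he1, he2⟩ := ((hcont.eventually (gt_mem_nhds hlt)).and
        (self_mem_nhdsWithin : ∀ᶠ e in 𝓝[>] (0:ℝ), e ∈ Ioi (0:ℝ))).exists
      have he : (0:ℝ) < e := he2
      have h1 := hY2.eventually (rho_usc hρdev (Y 0) (ρ (Y 0) + e) (by linarith))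
      have h2 := (hY2.prodMk_nhds hY1).eventually
        (hyp.usc (Y 0, Y) (Px (Y 0) Y + e) (by simp only; linarith))
      obtain ⟨n, hn1, hn2⟩ := (h1.and h2).exists
      have h3 := mul_le_mul hn1.le hn2.le (hP0 _ _) (by linarith [hρ0 (Y 0)])
      have h4 := hX n
      simp only at h3
      linarith
  have hPL0 : ∀ a y, 0 ≤ PL a y := fun a y => ge_of_tendsto' (hPL a y) fun t => hT0 a t y
  have hPL1 : ∀ a y, PL a y ≤ 1 := fun a y => le_of_tendsto' (hPL a y) fun t => hT1 a t y
  have hfl1 : ∀ y a, ρ a * PL a y ≤ 1 := fun y a => mul_le_one₀ (hρ1 a) (hPL0 a y) (hPL1 a y)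
  have hmain : ∀ x : S, ρ x = ⨆ a ∈ A, ρ a * PL a x := by
    intro y
    refine le_antisymm ?_ ?_
    · refine le_of_forall_lt_imp_le_of_dense fun γ hγ => ?_
      rcases le_or_gt γ 0 with h0 | h0
      · exact h0.trans (biSup_nonneg fun a => mul_nonneg (hρ0 a) (hPL0 a y))
      have hcont : Tendsto (fun e : ℝ => (1 - e) * (1 - e) * γ) (𝓝[>] 0)
          (𝓝 ((1 - 0) * (1 - 0) * γ)) :=
        Tendsto.mono_left (Continuous.tendsto (by fun_prop) 0) nhdsWithin_le_nhds
      have e1 : ((1:ℝ) - 0) * (1 - 0) * γ = γ := by ring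
      rw [e1] at hcont
      refine le_of_tendsto hcont ?_
      filter_upwards [Ioo_mem_nhdsGT (zero_lt_one' ℝ)] with e he
      obtain ⟨a, ha, h⟩ := rho_le_flux hyp hPL hρdev hge hle y γ h0 hγ e he.1 he.2
      exact h.trans (biSup_ge (F := fun a => ρ a * PL a y) (hfl1 y) ha)
    · refine biSup_le' (hρ0 y) fun a _ => ?_
      exact le_of_tendsto' ((hPL a y).const_mul (ρ a)) fun t => hge a y t
  refine ⟨hmain, le_antisymm (biSup_le' zero_le_one fun a _ => hρ1 a) ?_⟩
  have hnn : 0 ≤ ⨆ a ∈ A, ρ a := biSup_nonneg hρ0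
  rw [← hρdev.2.1]
  refine Real.iSup_le (fun x => ?_) hnn
  rw [hmain x]
  refine biSup_le' hnn fun a ha => ?_
  exact (mul_le_of_le_one_right (hρ0 a) (hPL1 a x)).trans (biSup_ge hρ1 ha)
end
end
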